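/- Let Ω be a nonempty set, X a set, S a linear subspace of the real vector space of functions Ω → ℝ (with pointwise operations) containing the constant function 1, and T : S → ℝ a linear map that is signature-preserving (T(ζ) ≥ 0 whenever ζ ∈ S satisfies ζ(ω) ≥ 0 for all ω ∈ Ω). Let η, ξ : Ω → X and f : X → ℝ be such that f∘η, f∘ξ, their pointwise squares f²∘η, f²∘ξ, and the pointwise product (f∘η)·(f∘ξ) all belong to S. Let a, b ∈ ℝ with a ≠ 0 and a + b > 0, and suppose f(ξ(ω)) − f(η(ω)) ≤ b for all ω ∈ Ω and f(ξ(ω)) + f(η(ω)) ≥ a for all ω ∈ Ω. Set c = (2/a)·T(f∘η), C₁ = (T(1) − c)·b + T(f∘η) − T(f∘ξ), and C₂ = (T(1) − c)·b² + T(f²∘η) − T(f²∘ξ). Then C₂ ≤ 0 implies C₁ ≤ 0. -/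

import Mathlib

/-! The hypotheses say that `b - (h - g)` and `g + h - a` are nonnegative, where `g = f ∘ η` and
`h = f ∘ ξ`. In their product the mixed terms `g * h` cancel, leaving a combination of `1`, `g`,
`h`, `g ^ 2` and `h ^ 2`. If `a • c = 2 • T g`, the value of `T` at this product is exactly
`C₂ - (a + b) • C₁`, whence `(a + b) • C₁ ≤ C₂`. -/

theorem sq_sub_sq_le_of_sub_le_of_le_add {A : Type*} [CommRing A] [PartialOrder A]
    [IsOrderedRing A] {a b g h : A} (hdiff : h - g ≤ b) (hsum : a ≤ g + h) :
    h ^ 2 - g ^ 2 ≤ b * (g + h - a) + a * (h - g) := by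
  have hprod : 0 ≤ (b - (h - g)) * (g + h - a) :=
    mul_nonneg (sub_nonneg.2 hdiff) (sub_nonneg.2 hsum)
  rw [← sub_nonneg]
  convert hprod using 1
  ring

section Forms

variable {K A E : Type*} [CommRing K] [CommRing A] [Algebra K A] [AddCommGroup E] [Module K E]
  {S : Submodule K A}

/-- The Hlawka one-form `C₁` of a linear map `T` on a subspace `S`, evaluated at `g = f ∘ η` and
`h = f ∘ ξ`. The coefficient `c`, which is `(2 / a) • T g` in the application, is a free
parameter, so that the form makes sense over any commutative ring. -/
def hlawkaOneForm (T : S →ₗ[K] E) (h1 : (1 : A) ∈ S) (b : K) (c : E) (g h : S) : E :=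
  b • (T ⟨1, h1⟩ - c) + T g - T h

/-- The Hlawka two-form `C₂`, the analogue of `hlawkaOneForm` for the squares of `b`, `g` and `h`.
As `S` need not be closed under multiplication, the squares of `g` and `h` come with proofs of
membership. -/
def hlawkaTwoForm (T : S →ₗ[K] E) (h1 : (1 : A) ∈ S) (b : K) (c : E) (g h : S)
    (hg2 : (g : A) ^ 2 ∈ S) (hh2 : (h : A) ^ 2 ∈ S) : E :=
  b ^ 2 • (T ⟨1, h1⟩ - c) + T ⟨(g : A) ^ 2, hg2⟩ - T ⟨(h : A) ^ 2, hh2⟩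

variable [PartialOrder A] [IsOrderedRing A] [PartialOrder E] [IsOrderedAddMonoid E]
  {T : S →ₗ[K] E} {a b : K} {g h : S}

theorem map_sq_sub_map_sq_le (hT : ∀ ζ : S, 0 ≤ (ζ : A) → 0 ≤ T ζ) (h1 : (1 : A) ∈ S)
    (hg2 : (g : A) ^ 2 ∈ S) (hh2 : (h : A) ^ 2 ∈ S)
    (hdiff : (h : A) - g ≤ b • 1) (hsum : a • 1 ≤ (g : A) + h) :
    T ⟨(h : A) ^ 2, hh2⟩ - T ⟨(g : A) ^ 2, hg2⟩ ≤
      b • (T g + T h - a • T ⟨1, h1⟩) + a • (T h - T g) := by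
  have hle : (h : A) ^ 2 - (g : A) ^ 2 ≤ b • ((g : A) + h - a • 1) + a • ((h : A) - g) := by
    simpa only [smul_one_mul] using sq_sub_sq_le_of_sub_le_of_le_add hdiff hsum
  have hmap := hT (b • (g + h - a • ⟨1, h1⟩) + a • (h - g) - (⟨_, hh2⟩ - ⟨_, hg2⟩))
    (sub_nonneg.2 hle)
  simpa only [map_sub, map_add, map_smul, sub_nonneg] using hmap

theorem add_smul_hlawkaOneForm_le_hlawkaTwoForm (hT : ∀ ζ : S, 0 ≤ (ζ : A) → 0 ≤ T ζ)
    (h1 : (1 : A) ∈ S) (hg2 : (g : A) ^ 2 ∈ S) (hh2 : (h : A) ^ 2 ∈ S)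
    (hdiff : (h : A) - g ≤ b • 1) (hsum : a • 1 ≤ (g : A) + h)
    {c : E} (hc : a • c = (2 : K) • T g) :
    (a + b) • hlawkaOneForm T h1 b c g h ≤ hlawkaTwoForm T h1 b c g h hg2 hh2 := by
  have hsq := map_sq_sub_map_sq_le hT h1 hg2 hh2 hdiff hsum
  rw [← sub_nonneg] at hsq ⊢
  convert hsq using 1
  unfold hlawkaOneForm hlawkaTwoForm
  linear_combination (norm := module) b • hc

end Forms

theorem hlawka_form_II_backward_general {K A E : Type*}
    [Field K] [LinearOrder K] [IsStrictOrderedRing K]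
    [CommRing A] [PartialOrder A] [IsOrderedRing A] [Algebra K A]
    [AddCommGroup E] [PartialOrder E] [IsOrderedAddMonoid E] [Module K E] [PosSMulMono K E]
    {S : Submodule K A} (h1 : (1 : A) ∈ S)
    {T : S →ₗ[K] E} (hT : ∀ ζ : S, 0 ≤ (ζ : A) → 0 ≤ T ζ)
    {g h : S} (hg2 : (g : A) ^ 2 ∈ S) (hh2 : (h : A) ^ 2 ∈ S)
    {a b : K} (ha : a ≠ 0) (hab : 0 < a + b)
    (hdiff : (h : A) - g ≤ b • 1) (hsum : a • 1 ≤ (g : A) + h)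
    (hC₂ : hlawkaTwoForm T h1 b ((2 / a) • T g) g h hg2 hh2 ≤ 0) :
    hlawkaOneForm T h1 b ((2 / a) • T g) g h ≤ 0 := by
  have hc : a • (2 / a) • T g = (2 : K) • T g := by rw [smul_smul, mul_div_cancel₀ _ ha]
  have hC₁ : (a + b) • hlawkaOneForm T h1 b ((2 / a) • T g) g h ≤ 0 :=
    (add_smul_hlawkaOneForm_le_hlawkaTwoForm hT h1 hg2 hh2 hdiff hsum hc).trans hC₂
  exact le_of_smul_le_smul_left (hC₁.trans_eq (smul_zero _).symm) hab

theorem hlawka_form_II_backward {Ω X : Type*} [Nonempty Ω]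
    (S : Submodule ℝ (Ω → ℝ)) (h1 : (1 : Ω → ℝ) ∈ S)
    (T : S →ₗ[ℝ] ℝ)
    (hT : ∀ ζ : S, (∀ ω : Ω, 0 ≤ (ζ : Ω → ℝ) ω) → 0 ≤ T ζ)
    (η ξ : Ω → X) (f : X → ℝ)
    (hfη : (fun ω => f (η ω)) ∈ S) (hfξ : (fun ω => f (ξ ω)) ∈ S)
    (hfη2 : (fun ω => (f (η ω)) ^ 2) ∈ S) (hfξ2 : (fun ω => (f (ξ ω)) ^ 2) ∈ S)
    (hprod : (fun ω => f (η ω) * f (ξ ω)) ∈ S)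
    (a b : ℝ) (ha : a ≠ 0) (hab : 0 < a + b)
    (hdiff : ∀ ω : Ω, f (ξ ω) - f (η ω) ≤ b)
    (hsum : ∀ ω : Ω, a ≤ f (ξ ω) + f (η ω)) :
    (T ⟨1, h1⟩ - (2 / a) * T ⟨fun ω => f (η ω), hfη⟩) * b ^ 2 + T ⟨fun ω => (f (η ω)) ^ 2, hfη2⟩ - T ⟨fun ω => (f (ξ ω)) ^ 2, hfξ2⟩ ≤ 0 → (T ⟨1, h1⟩ - (2 / a) * T ⟨fun ω => f (η ω), hfη⟩) * b + T ⟨fun ω => f (η ω), hfη⟩ - T ⟨fun ω => f (ξ ω), hfξ⟩ ≤ 0 := by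
  rw [mul_comm _ (b ^ 2), mul_comm _ b]
  exact hlawka_form_II_backward_general h1 hT (g := ⟨_, hfη⟩) (h := ⟨_, hfξ⟩) hfη2 hfξ2 ha hab
    (fun ω => by simpa using hdiff ω) (fun ω => by simpa [add_comm] using hsum ω)
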